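/- Let n ≥ 2, let 1 ≤ s ≤ n−1, and let C_s be the cyclic shift by s on {1,…,n}. Then C_s is fixed-point-free, Strang canonical, row-settled, and column-settled; the bandwidth of C_s equals max{s, n − s}; and iterating the reduction map starting from C_s reaches the identity in exactly n − 1 steps. -/

import Mathlib

/-- The bandwidth of a permutation `σ` of `{0,…,n-1}`: `max_i |σ(i) - i|`. -/
def bandwidth {n : ℕ} (σ : Equiv.Perm (Fin n)) : ℕ :=
  Finset.univ.sup fun i : Fin n => ((σ i : ℤ) - (i : ℤ)).natAbs

/-- `c` is a cut point of `σ` if `σ` maps the initial segment `{0,…,c}` onto itself. -/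
def IsCutPoint {n : ℕ} (σ : Equiv.Perm (Fin n)) (c : Fin n) : Prop :=
  ∀ j : Fin n, j ≤ c → σ j ≤ c

/-- Indices `i ≤ j` lie in the same section of `σ` if there is no cut point `c`
with `i ≤ c < j`. -/
def SameSection {n : ℕ} (σ : Equiv.Perm (Fin n)) (i j : Fin n) : Prop :=
  i ≤ j ∧ ∀ c : Fin n, i ≤ c → c < j → ¬ IsCutPoint σ c

/-- Unordered version of `SameSection`. -/
def InSameSection {n : ℕ} (σ : Equiv.Perm (Fin n)) (i j : Fin n) : Prop :=
  SameSection σ i j ∨ SameSection σ j i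

/-- `σ` is upper-canonical: for `i < j` with `σ(i) > i` and `σ(j) > j`, `σ(i) < σ(j)`. -/
def UpperCanonical {n : ℕ} (σ : Equiv.Perm (Fin n)) : Prop :=
  ∀ i j : Fin n, i < j → i < σ i → j < σ j → σ i < σ j

/-- `σ` is lower-canonical: for `i < j` with `σ(i) < i` and `σ(j) < j`, `σ(i) < σ(j)`. -/
def LowerCanonical {n : ℕ} (σ : Equiv.Perm (Fin n)) : Prop :=
  ∀ i j : Fin n, i < j → σ i < i → σ j < j → σ i < σ j

/-- `σ` is Strang canonical if it is both upper- and lower-canonical. -/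
def StrangCanonical {n : ℕ} (σ : Equiv.Perm (Fin n)) : Prop :=
  UpperCanonical σ ∧ LowerCanonical σ

/-- `σ` is row-settled: no indices `i < j` in the same section
with `σ(i) < i` (negative row) and `σ(j) > j` (positive row). -/
def RowSettled {n : ℕ} (σ : Equiv.Perm (Fin n)) : Prop :=
  ∀ i j : Fin n, i < j → SameSection σ i j → ¬ (σ i < i ∧ j < σ j)

/-- `σ` is settled if it is row-settled or column-settled
(column-settled means `σ⁻¹` is row-settled). -/
def Settled {n : ℕ} (σ : Equiv.Perm (Fin n)) : Prop :=
  RowSettled σ ∨ RowSettled σ⁻¹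

/-- The reducing permutation of `σ`: the product of the (pairwise disjoint)
transpositions `(i, i+1)` over all `i` with `σ(i) > i` and `σ(i+1) < i+1`. -/
def reducingPerm {n : ℕ} (σ : Equiv.Perm (Fin n)) : Equiv.Perm (Fin n) :=
  ((List.finRange n).filterMap fun i : Fin n =>
    if h : (i : ℕ) + 1 < n then
      let j : Fin n := ⟨(i : ℕ) + 1, h⟩
      if i < σ i ∧ σ j < j then some (Equiv.swap i j) else none
    else none).prod

/-- The reduction of `σ` is `σ` composed with its reducing permutation. -/
def reduction {n : ℕ} (σ : Equiv.Perm (Fin n)) : Equiv.Perm (Fin n) :=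
  σ * reducingPerm σ

/-- A bubblesort step for `σ`: a nonidentity permutation `t` that is a product of
pairwise disjoint adjacent transpositions `(i, i+1)`, each satisfying `σ(i) > σ(i+1)`. -/
def IsBubbleStep {n : ℕ} (σ t : Equiv.Perm (Fin n)) : Prop :=
  t ≠ 1 ∧ ∃ l : List (Fin n),
    l.Pairwise (fun i j => (i : ℕ) + 2 ≤ (j : ℕ)) ∧
    (∀ i ∈ l, ∃ h : (i : ℕ) + 1 < n, σ ⟨(i : ℕ) + 1, h⟩ < σ i) ∧
    t = (l.map fun i : Fin n =>
      (if h : (i : ℕ) + 1 < n then Equiv.swap i ⟨(i : ℕ) + 1, h⟩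
       else 1 : Equiv.Perm (Fin n))).prod

/-- The number of inversions of `σ`: pairs `i < j` with `σ(i) > σ(j)`. -/
def inversions {n : ℕ} (σ : Equiv.Perm (Fin n)) : ℕ :=
  (Finset.univ.filter fun p : Fin n × Fin n => p.1 < p.2 ∧ σ p.2 < σ p.1).card

/-- The cyclic shift by `s` on `{0,…,n-1}`: `i ↦ (i + s) mod n`. -/
def cyclicShift (n s : ℕ) : Equiv.Perm (Fin n) := (finRotate n) ^ s

/-!
Follow the values rather than the rows. A row with `σ i > i` holds a value that still has to move
down the list, a row with `σ i < i` one that has to move up, and the reduction exchanges two such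
values whenever they are adjacent and face each other. In `C_s` the values `v ≥ s` fill the first
`n - s` rows and have to travel `s` places down; the values `w < s` fill the last `s` rows and have
to travel `n - s` places up. The queue dissolves from the front without collisions: at step `t`
exactly the pairs `w < s ≤ v` with `v - w = n - 1 - t` change places. So a value `v ≥ s` waits for
`n - 1 - v` steps and then moves at each step until it is home, and a value `w < s` does so after
waiting `w` steps. The value `s` starts moving last among those `≥ s`, and it is home at time
`(n - 1 - s) + s = n - 1`.
-/

open Equiv

section Reduction

variable {n : ℕ} {σ : Perm (Fin n)} {i j k l : Fin n}

/-- The rows `i` and `j` are exchanged by the reducing permutation of `σ`: they are adjacent, and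
`σ` exceeds the diagonal in row `i` and stays below it in row `j`. -/
def IsReducingPair (σ : Perm (Fin n)) (i j : Fin n) : Prop :=
  (i : ℕ) + 1 = j ∧ i < σ i ∧ σ j < j

theorem IsReducingPair.ne (h : IsReducingPair σ i j) : i ≠ j := by
  rintro rfl
  exact absurd h.1 (Nat.succ_ne_self _)

theorem IsReducingPair.disjoint_swap (hij : IsReducingPair σ i j) (hkl : IsReducingPair σ k l)
    (hik : i ≠ k) : (swap i j).Disjoint (swap k l) := by
  have hjl : j ≠ l := fun h => hik (Fin.ext (by have := hij.1; have := hkl.1; omega))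
  have hil : i ≠ l := by
    rintro rfl
    exact hij.2.1.asymm hkl.2.2
  have hjk : j ≠ k := by
    rintro rfl
    exact hkl.2.1.asymm hij.2.2
  exact Perm.disjoint_swap_swap (by simp [hij.ne, hkl.ne, hik, hil, hjk, hjl])

/-- The transposition `(i, i + 1)` if it is a factor of the reducing permutation of `σ`, and `none`
otherwise; the body repeats the function inside `reducingPerm`. -/
def reducingSwap (σ : Perm (Fin n)) (i : Fin n) : Option (Perm (Fin n)) :=
  if h : (i : ℕ) + 1 < n then
    let j : Fin n := ⟨(i : ℕ) + 1, h⟩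
    if i < σ i ∧ σ j < j then some (swap i j) else none
  else none

theorem reducingPerm_eq_prod (σ : Perm (Fin n)) :
    reducingPerm σ = ((List.finRange n).filterMap (reducingSwap σ)).prod :=
  rfl

theorem reducingSwap_eq_some_iff {f : Perm (Fin n)} :
    reducingSwap σ i = some f ↔ ∃ j, IsReducingPair σ i j ∧ swap i j = f := by
  simp only [reducingSwap, IsReducingPair]
  constructor
  · intro h
    split_ifs at h with hi hσ
    exact ⟨⟨i + 1, hi⟩, ⟨rfl, hσ⟩, Option.some_injective _ h⟩
  · rintro ⟨⟨_, hj⟩, ⟨rfl, hσ⟩, rfl⟩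
    rw [dif_pos hj, if_pos hσ]

theorem pairwise_disjoint_reducingSwap (σ : Perm (Fin n)) :
    ((List.finRange n).filterMap (reducingSwap σ)).Pairwise Perm.Disjoint := by
  simp only [List.pairwise_filterMap, reducingSwap_eq_some_iff]
  refine (List.nodup_finRange n).imp ?_
  rintro i k hik _ ⟨j, hij, rfl⟩ _ ⟨l, hkl, rfl⟩
  exact hij.disjoint_swap hkl hik

theorem IsReducingPair.reducingPerm_apply (h : IsReducingPair σ i j)
    (hk : k ∈ (swap i j).support) : reducingPerm σ k = swap i j k :=
  have mem : swap i j ∈ (List.finRange n).filterMap (reducingSwap σ) :=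
    List.mem_filterMap.2 ⟨i, List.mem_finRange i, reducingSwap_eq_some_iff.2 ⟨j, h, rfl⟩⟩
  (Perm.eq_on_support_mem_disjoint mem (pairwise_disjoint_reducingSwap σ) k hk).symm

theorem IsReducingPair.reducingPerm_apply_left (h : IsReducingPair σ i j) :
    reducingPerm σ i = j := by
  rw [h.reducingPerm_apply (by simp [Perm.support_swap h.ne]), swap_apply_left]

theorem IsReducingPair.reducingPerm_apply_right (h : IsReducingPair σ i j) :
    reducingPerm σ j = i := by
  rw [h.reducingPerm_apply (by simp [Perm.support_swap h.ne]), swap_apply_right]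

theorem exists_isReducingPair_of_reducingPerm_ne (h : reducingPerm σ k ≠ k) :
    ∃ l, IsReducingPair σ k l ∨ IsReducingPair σ l k := by
  rw [reducingPerm_eq_prod, ← Perm.mem_support] at h
  obtain ⟨f, hf, hk⟩ := Perm.exists_mem_support_of_mem_support_prod h
  obtain ⟨i, -, hi⟩ := List.mem_filterMap.1 hf
  obtain ⟨j, hij, rfl⟩ := reducingSwap_eq_some_iff.1 hi
  rw [Perm.support_swap hij.ne, Finset.mem_insert, Finset.mem_singleton] at hk
  rcases hk with rfl | rfl
  · exact ⟨j, .inl hij⟩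
  · exact ⟨i, .inr hij⟩

theorem reducingPerm_involutive (σ : Perm (Fin n)) : Function.Involutive (reducingPerm σ) := by
  intro k
  by_cases hk : reducingPerm σ k = k
  · rw [hk, hk]
  · obtain ⟨l, h | h⟩ := exists_isReducingPair_of_reducingPerm_ne hk
    · rw [h.reducingPerm_apply_left, h.reducingPerm_apply_right]
    · rw [h.reducingPerm_apply_right, h.reducingPerm_apply_left]

theorem reduction_inv_apply (σ : Perm (Fin n)) (v : Fin n) :
    (reduction σ)⁻¹ v = reducingPerm σ (σ⁻¹ v) := by
  rw [Perm.inv_eq_iff_eq, reduction, Perm.mul_apply, reducingPerm_involutive]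
  exact (σ.apply_symm_apply v).symm

end Reduction

section CyclicShift

variable {n s : ℕ}

theorem val_cyclicShift (i : Fin n) : (cyclicShift n s i : ℕ) = (i + s) % n := by
  have := i.neZero
  induction s with
  | zero => simp [cyclicShift, Nat.mod_eq_of_lt i.isLt]
  | succ s ih =>
    rw [cyclicShift, pow_succ', Perm.mul_apply, ← cyclicShift, finRotate_apply, Fin.val_add, ih,
      Fin.val_one', Nat.add_mod_mod, Nat.mod_add_mod, add_assoc]

theorem val_cyclicShift_eq_ite (hs : s ≤ n) (i : Fin n) :
    (cyclicShift n s i : ℕ) = if (i : ℕ) + s < n then (i : ℕ) + s else i + s - n := by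
  have hi := i.isLt
  rw [val_cyclicShift]
  split_ifs with h
  · exact Nat.mod_eq_of_lt h
  · rw [Nat.mod_eq_sub_mod (by omega), Nat.mod_eq_of_lt (by omega)]

theorem inv_cyclicShift (hs : s ≤ n) : (cyclicShift n s)⁻¹ = cyclicShift n (n - s) := by
  refine inv_eq_of_mul_eq_one_right (Equiv.ext fun i => Fin.ext ?_)
  rw [Perm.mul_apply, val_cyclicShift_eq_ite hs, val_cyclicShift_eq_ite (Nat.sub_le n s),
    Perm.one_apply]
  split_ifs <;> omega

theorem cyclicShift_apply_ne (hs0 : 0 < s) (hs : s < n) (i : Fin n) : cyclicShift n s i ≠ i := by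
  have hi := val_cyclicShift_eq_ite hs.le i
  rw [ne_eq, Fin.ext_iff]
  split_ifs at hi <;> omega

theorem upperCanonical_cyclicShift (hs : s ≤ n) : UpperCanonical (cyclicShift n s) := by
  intro i j hij _ hj
  have := val_cyclicShift_eq_ite hs i
  have := val_cyclicShift_eq_ite hs j
  grind

theorem lowerCanonical_cyclicShift (hs : s ≤ n) : LowerCanonical (cyclicShift n s) := by
  intro i j hij hi hj
  have := val_cyclicShift_eq_ite hs i
  have := val_cyclicShift_eq_ite hs j
  grind

theorem rowSettled_cyclicShift (hs : s ≤ n) : RowSettled (cyclicShift n s) := by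
  rintro i j hij - ⟨hi, hj⟩
  have := val_cyclicShift_eq_ite hs i
  have := val_cyclicShift_eq_ite hs j
  grind

theorem natAbs_cyclicShift_sub (hs : s ≤ n) (i : Fin n) :
    ((cyclicShift n s i : ℤ) - (i : ℤ)).natAbs = if (i : ℕ) + s < n then s else n - s := by
  have := val_cyclicShift_eq_ite hs i
  split_ifs at this ⊢ <;> omega

theorem bandwidth_cyclicShift (hs0 : 0 < s) (hs : s < n) :
    bandwidth (cyclicShift n s) = max s (n - s) := by
  simp only [bandwidth, natAbs_cyclicShift_sub hs.le]
  apply le_antisymm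
  · refine Finset.sup_le fun i _ => ?_
    split_ifs
    exacts [le_max_left .., le_max_right ..]
  · refine max_le ?_ ?_
    · refine Finset.le_sup_of_le (Finset.mem_univ ⟨0, by omega⟩) (le_of_eq ?_)
      rw [if_pos (by simpa using hs)]
    · refine Finset.le_sup_of_le (Finset.mem_univ ⟨n - 1, by omega⟩) (le_of_eq ?_)
      rw [if_neg (by simp only [not_lt]; omega)]

end CyclicShift

section Trajectories

variable {n s t v w : ℕ}

/-- The row of the value `v` after `t` reductions of `C_s`: a value waits, then moves one row per
step, and stops at home. The truncated subtractions keep the step counts at `0` while it waits. -/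
def shiftPosition (n s t v : ℕ) : ℕ :=
  if s ≤ v then v - s + min (t - (n - 1 - v)) s else n - s + v - min (t - v) (n - s)

/-- The values `v` (moving down) and `w` (moving up) change places at step `t` of the reduction of
`C_s`. The last condition is `v - w = n - 1 - t`, written without subtraction. -/
def IsExchange (n s t v w : ℕ) : Prop :=
  s ≤ v ∧ w < s ∧ w + n = v + t + 1

theorem isExchange_iff_shiftPosition (hv : v < n) :
    IsExchange n s t v w ↔
      shiftPosition n s t v + 1 = shiftPosition n s t w ∧
        shiftPosition n s t v < v ∧ w < shiftPosition n s t w := by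
  unfold IsExchange shiftPosition
  split_ifs <;> omega

theorem IsExchange.shiftPosition_succ_left (h : IsExchange n s t v w) (hv : v < n) :
    shiftPosition n s (t + 1) v = shiftPosition n s t w := by
  unfold IsExchange at h
  unfold shiftPosition
  split_ifs <;> omega

theorem IsExchange.shiftPosition_succ_right (h : IsExchange n s t v w) (hv : v < n) :
    shiftPosition n s (t + 1) w = shiftPosition n s t v := by
  unfold IsExchange at h
  unfold shiftPosition
  split_ifs <;> omega

theorem exists_isExchange_of_shiftPosition_succ_ne (hv : v < n)
    (h : shiftPosition n s (t + 1) v ≠ shiftPosition n s t v) :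
    ∃ w < n, IsExchange n s t v w ∨ IsExchange n s t w v := by
  unfold shiftPosition at h
  unfold IsExchange
  by_cases hsv : s ≤ v
  · simp only [if_pos hsv] at h
    exact ⟨v + t + 1 - n, by omega, .inl (by omega)⟩
  · simp only [if_neg hsv] at h
    exact ⟨v + n - (t + 1), by omega, .inr (by omega)⟩

theorem val_inv_cyclicShift (hs : s ≤ n) (v : Fin n) :
    ((cyclicShift n s)⁻¹ v : ℕ) = shiftPosition n s 0 v := by
  rw [inv_cyclicShift hs, val_cyclicShift_eq_ite (Nat.sub_le n s), shiftPosition]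
  split_ifs <;> omega

theorem isReducingPair_inv_iff_isExchange {σ : Perm (Fin n)}
    (hσ : ∀ v, (σ⁻¹ v : ℕ) = shiftPosition n s t v) (v w : Fin n) :
    IsReducingPair σ (σ⁻¹ v) (σ⁻¹ w) ↔ IsExchange n s t v w := by
  have apply_inv (u : Fin n) : σ (σ⁻¹ u) = u := σ.apply_symm_apply u
  rw [isExchange_iff_shiftPosition v.isLt, IsReducingPair, apply_inv, apply_inv, Fin.lt_def,
    Fin.lt_def, hσ, hσ]

theorem val_inv_reduction_apply {σ : Perm (Fin n)}
    (hσ : ∀ v, (σ⁻¹ v : ℕ) = shiftPosition n s t v) (v : Fin n) :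
    ((reduction σ)⁻¹ v : ℕ) = shiftPosition n s (t + 1) v := by
  have pair_iff := isReducingPair_inv_iff_isExchange hσ
  rw [reduction_inv_apply]
  by_cases hex : ∃ w : Fin n, IsExchange n s t v w ∨ IsExchange n s t w v
  · obtain ⟨w, h | h⟩ := hex
    · rw [((pair_iff v w).2 h).reducingPerm_apply_left, hσ, h.shiftPosition_succ_left v.isLt]
    · rw [((pair_iff w v).2 h).reducingPerm_apply_right, hσ, h.shiftPosition_succ_right w.isLt]
  · have fixed : reducingPerm σ (σ⁻¹ v) = σ⁻¹ v := by
      by_contra hne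
      obtain ⟨k, hk⟩ := exists_isReducingPair_of_reducingPerm_ne hne
      obtain ⟨w, rfl⟩ := σ⁻¹.surjective k
      rw [pair_iff, pair_iff] at hk
      exact hex ⟨w, hk⟩
    have stationary : shiftPosition n s (t + 1) v = shiftPosition n s t v := by
      by_contra hne
      obtain ⟨w, hw, h⟩ := exists_isExchange_of_shiftPosition_succ_ne v.isLt hne
      exact hex ⟨⟨w, hw⟩, h⟩
    rw [fixed, hσ, stationary]

theorem val_inv_iterate_reduction_cyclicShift (hs : s ≤ n) (t : ℕ) (v : Fin n) :
    ((reduction^[t] (cyclicShift n s))⁻¹ v : ℕ) = shiftPosition n s t v := by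
  induction t generalizing v with
  | zero => exact val_inv_cyclicShift hs v
  | succ t ih =>
    rw [Function.iterate_succ_apply']
    exact val_inv_reduction_apply ih v

theorem shiftPosition_eq_self (hv : v < n) (ht : n - 1 ≤ t) : shiftPosition n s t v = v := by
  unfold shiftPosition
  split_ifs <;> omega

theorem shiftPosition_shift_lt (hs0 : 0 < s) (ht : t < n - 1) : shiftPosition n s t s < s := by
  rw [shiftPosition, if_pos le_rfl]
  omega

theorem iterate_reduction_cyclicShift_eq_one_iff (hs0 : 0 < s) (hs : s < n) :
    reduction^[t] (cyclicShift n s) = 1 ↔ n - 1 ≤ t := by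
  have position := val_inv_iterate_reduction_cyclicShift hs.le t
  constructor
  · intro h
    by_contra! ht
    have home := position ⟨s, hs⟩
    rw [h, inv_one, Perm.one_apply] at home
    exact (shiftPosition_shift_lt hs0 ht).ne home.symm
  · intro ht
    rw [← inv_eq_one]
    exact Equiv.ext fun v => Fin.ext ((position v).trans (shiftPosition_eq_self v.isLt ht))

end Trajectories

/-- The cyclic shift `C_s` on `{1,…,n}` is fixed-point-free, Strang
canonical, row-settled and column-settled; its bandwidth is `max s (n - s)`; and iterating
the reduction map reaches the identity in exactly `n - 1` steps. -/
theorem stmt_10 (n : ℕ) (hn : 2 ≤ n) (s : ℕ) (hs1 : 1 ≤ s) (hs2 : s ≤ n - 1) :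
    (∀ i : Fin n, cyclicShift n s i ≠ i) ∧
    StrangCanonical (cyclicShift n s) ∧
    RowSettled (cyclicShift n s) ∧
    RowSettled (cyclicShift n s)⁻¹ ∧
    bandwidth (cyclicShift n s) = max s (n - s) ∧
    reduction^[n - 1] (cyclicShift n s) = 1 ∧
    (∀ k < n - 1, reduction^[k] (cyclicShift n s) ≠ 1) := by
  have hs : s < n := by omega
  have reduced_iff (t : ℕ) : reduction^[t] (cyclicShift n s) = 1 ↔ n - 1 ≤ t :=
    iterate_reduction_cyclicShift_eq_one_iff hs1 hs
  refine ⟨cyclicShift_apply_ne hs1 hs,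
    ⟨upperCanonical_cyclicShift hs.le, lowerCanonical_cyclicShift hs.le⟩,
    rowSettled_cyclicShift hs.le, ?_, bandwidth_cyclicShift hs1 hs,
    (reduced_iff _).2 le_rfl, fun k hk h => hk.not_ge ((reduced_iff k).1 h)⟩
  rw [inv_cyclicShift hs.le]
  exact rowSettled_cyclicShift (Nat.sub_le n s)
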